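/- Fix ρ ∈ (0,1) and α ∈ (0,1). Let (α_n) be a sequence in (0,1) with n·α_n → α, let c_n be defined by Φ(−c_n) = α_n, and for n ≥ 2 let z₀(n) be the unique real number with Φ(−d(ρ, c_n, z₀(n))) = 1/n. Then ∫_{−∞}^{z₀(n)} n·(n·Φ(−d) − 1)·Φ(d)^{n−2}·φ(d)·d·G(ρ,c_n,z)²·φ(z) dz → 0 as n → ∞, where d = d(ρ,c_n,z) and G(ρ,c,z) = (c + z/√ρ)/(2(1−ρ)^{3/2}). -/

import Mathlib

open MeasureTheory Filter

/-- The standard normal density. -/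
noncomputable def phi (x : ℝ) : ℝ := (Real.sqrt (2 * Real.pi))⁻¹ * Real.exp (-x ^ 2 / 2)

/-- The standard normal cumulative distribution function. -/
noncomputable def Phi (x : ℝ) : ℝ := ∫ t in Set.Iic x, phi t

/-- d(ρ,c,z) = (c + √ρ·z)/√(1−ρ). -/
noncomputable def dd (ρ c z : ℝ) : ℝ := (c + Real.sqrt ρ * z) / Real.sqrt (1 - ρ)

/-- G(ρ,c,z) = (c + z/√ρ)/(2(1−ρ)^{3/2}). -/
noncomputable def G (ρ c z : ℝ) : ℝ :=
  (c + z / Real.sqrt ρ) / (2 * (1 - ρ) ^ ((3 : ℝ) / 2))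

/-- H_n(ρ,c) = ∫ Φ(d(ρ,c,z))^n φ(z) dz. -/
noncomputable def Hn (n : ℕ) (ρ c : ℝ) : ℝ := ∫ z : ℝ, (Phi (dd ρ c z)) ^ n * phi z


lemma phi_pos' (x : ℝ) : 0 < phi x := by
  unfold phi; have := Real.pi_pos; positivity

lemma phi_neg' (x : ℝ) : phi (-x) = phi x := by simp [phi]

lemma phi_int' : Integrable phi := by
  have h := (integrable_exp_neg_mul_sq (b := 1/2) (by norm_num)).const_mul
    (Real.sqrt (2 * Real.pi))⁻¹
  refine h.congr (Eventually.of_forall fun x => ?_)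
  simp only [phi]; congr 2; ring

lemma phi_total' : ∫ x, phi x = 1 := by
  have h := integral_gaussian (1/2)
  have h2 : ∀ x : ℝ, phi x = (Real.sqrt (2 * Real.pi))⁻¹ * Real.exp (-(1/2) * x^2) := by
    intro x; simp only [phi]; congr 2; ring
  simp_rw [h2]
  rw [integral_const_mul, h, show Real.pi / (1/2) = 2 * Real.pi by ring]
  have := Real.pi_pos
  exact inv_mul_cancel₀ (by positivity)

lemma Phi_neg_eq' (x : ℝ) : Phi (-x) = ∫ t in Set.Ioi x, phi t := by
  unfold Phi
  have := integral_comp_neg_Iic (-x) phi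
  simp only [phi_neg', neg_neg] at this
  exact this

lemma Phi_add' (x : ℝ) : Phi x + Phi (-x) = 1 := by
  rw [Phi_neg_eq', Phi, ← phi_total']
  exact intervalIntegral.integral_Iic_add_Ioi phi_int'.integrableOn phi_int'.integrableOn

lemma Phi_mono' {x y : ℝ} (h : x ≤ y) : Phi x ≤ Phi y := by
  unfold Phi
  exact setIntegral_mono_set phi_int'.integrableOn
    (Eventually.of_forall fun x => (phi_pos' x).le) (Set.Iic_subset_Iic.2 h).eventuallyLE

lemma Phi_nonneg' (x : ℝ) : 0 ≤ Phi x :=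
  integral_nonneg fun x => (phi_pos' x).le

lemma phi_anti' {x y : ℝ} (hx : 0 ≤ x) (h : x ≤ y) : phi y ≤ phi x := by
  unfold phi
  gcongr

lemma mills0' {d : ℝ} (hd : 0 ≤ d) : phi d ≤ Real.exp (3/2) * (1 + d) * Phi (-d) := by
  have hd1 : 0 < 1 + d := by linarith
  set h := 1 / (1 + d) with hh
  have hpos : 0 < h := by positivity
  have hmul : h * (1 + d) = 1 := by rw [hh]; field_simp
  have h1 : h ≤ 1 := by nlinarith
  have hdh : d * h ≤ 1 := by nlinarith
  have key : h * phi (d + h) ≤ Phi (-d) := by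
    rw [Phi_neg_eq']
    calc h * phi (d + h) = ∫ t in Set.Ioc d (d+h), phi (d+h) := by
          simp [hpos.le]
      _ ≤ ∫ t in Set.Ioc d (d+h), phi t := by
          refine setIntegral_mono_on (integrableOn_const (by simp)) phi_int'.integrableOn
            measurableSet_Ioc ?_
          intro x hx
          exact phi_anti' (hd.trans hx.1.le) hx.2
      _ ≤ ∫ t in Set.Ioi d, phi t :=
          setIntegral_mono_set phi_int'.integrableOn
            (Eventually.of_forall fun x => (phi_pos' x).le)
            (Set.Ioc_subset_Ioi_self).eventuallyLE
  have key2 : phi d ≤ Real.exp (3/2) * phi (d+h) := by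
    unfold phi
    rw [mul_left_comm, ← Real.exp_add]
    gcongr
    nlinarith
  calc phi d ≤ Real.exp (3/2) * phi (d+h) := key2
    _ = Real.exp (3/2) * (1+d) * (h * phi (d+h)) := by
        linear_combination (-(Real.exp (3/2) * phi (d+h))) * hmul
    _ ≤ _ := by gcongr

lemma mills' (d : ℝ) : phi d ≤ Real.exp (3/2) * (1 + |d|) * Phi (-d) := by
  rcases le_total 0 d with hd | hd
  · rw [abs_of_nonneg hd]; exact mills0' hd
  · have h0 := mills0' (le_refl (0:ℝ))
    have h1 : phi d ≤ phi 0 := by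
      rw [← phi_neg' d]; exact phi_anti' le_rfl (by linarith)
    have h2 : Phi (-0) ≤ Phi (-d) := Phi_mono' (by linarith)
    refine h1.trans (h0.trans ?_)
    have := Phi_nonneg' (-0)
    have := abs_nonneg d
    gcongr

lemma Phi_pos' (x : ℝ) : 0 < Phi x := by
  have h := mills' (-x)
  rw [neg_neg] at h
  by_contra hx
  have h0 : Phi x = 0 := le_antisymm (not_lt.1 hx) (Phi_nonneg' x)
  rw [h0, mul_zero] at h
  exact absurd (phi_pos' (-x)) (not_lt.2 h)

lemma core' (n : ℕ) (hn : 2 ≤ n) (d : ℝ) :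
    |(n : ℝ) * ((n : ℝ) * Phi (-d) - 1) * (Phi d) ^ (n - 2) * phi d|
      ≤ 2 * Real.exp 2 * Real.exp (3/2) * (1 + |d|) := by
  set p := Phi (-d) with hp
  have hp0 : 0 ≤ p := Phi_nonneg' _
  have hq : Phi d = 1 - p := by linarith [Phi_add' d]
  have hq0 : 0 ≤ 1 - p := hq ▸ Phi_nonneg' d
  have hm := mills' d
  rw [← hp] at hm
  have hd := abs_nonneg d
  set t := (n : ℝ) * p with ht
  have ht0 : 0 ≤ t := by positivity
  have hpow : (1 - p) ^ (n - 2) ≤ Real.exp 2 * Real.exp (-t) := by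
    calc (1 - p) ^ (n-2) ≤ (Real.exp (-p)) ^ (n-2) := by
          gcongr; exact Real.one_sub_le_exp_neg p
      _ = Real.exp (((n - 2 : ℕ) : ℝ) * (-p)) := by rw [Real.exp_nat_mul]
      _ ≤ Real.exp 2 * Real.exp (-t) := by
          rw [← Real.exp_add, Nat.cast_sub hn]
          gcongr
          push_cast
          nlinarith
  have habs : |t - 1| ≤ t + 1 := by rw [abs_le]; constructor <;> linarith
  have hexp : (t + 1) * t * Real.exp (-t) ≤ 2 := by
    have := Real.quadratic_le_exp_of_nonneg ht0
    rw [Real.exp_neg, ← div_eq_mul_inv, div_le_iff₀ (Real.exp_pos t)]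
    nlinarith
  rw [hq, abs_mul, abs_mul, abs_mul, abs_of_nonneg (pow_nonneg hq0 _), abs_of_pos (phi_pos' d),
    Nat.abs_cast]
  calc (n : ℝ) * |t - 1| * (1 - p) ^ (n-2) * phi d
      ≤ (n : ℝ) * (t + 1) * (Real.exp 2 * Real.exp (-t)) * (Real.exp (3/2) * (1 + |d|) * p) := by
        have := (phi_pos' d).le
        gcongr
    _ = ((t + 1) * t * Real.exp (-t)) * (Real.exp 2 * Real.exp (3/2) * (1 + |d|)) := by
        rw [ht]; ring
    _ ≤ 2 * (Real.exp 2 * Real.exp (3/2) * (1 + |d|)) := by gcongr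
    _ = _ := by ring

lemma g_int' : Integrable (fun z : ℝ => z ^ 4 * phi z) := by
  have h := (integrable_rpow_mul_exp_neg_mul_sq (b := 1/2) (by norm_num) (s := (4:ℕ))
    (by norm_num)).const_mul (Real.sqrt (2 * Real.pi))⁻¹
  refine h.congr (Eventually.of_forall fun x => ?_)
  simp only [phi, Real.rpow_natCast]
  rw [mul_left_comm]; congr 3; ring

lemma tail' {g : ℝ → ℝ} (hg : Integrable g) :
    Tendsto (fun a => ∫ z in Set.Iic a, g z) atBot (nhds 0) := by
  have h1 := intervalIntegral_tendsto_integral_Iic (μ := volume) (f := g) 0 hg.integrableOn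
    tendsto_id
  have h2 := (tendsto_const_nhds (x := ∫ z in Set.Iic (0:ℝ), g z)).sub h1
  rw [sub_self] at h2
  refine h2.congr fun a => ?_
  have := intervalIntegral.integral_Iic_sub_Iic (μ := volume) (f := g) (a := a) (b := 0)
    hg.integrableOn hg.integrableOn
  simp only [id]
  linarith

theorem integral_case1_tendsto_zero
    (ρ : ℝ) (hρ : ρ ∈ Set.Ioo (0:ℝ) 1) (α : ℝ) (hα : α ∈ Set.Ioo (0:ℝ) 1)
    (αseq : ℕ → ℝ) (hαseq : ∀ n, αseq n ∈ Set.Ioo (0:ℝ) 1)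
    (hlim : Tendsto (fun n : ℕ => (n : ℝ) * αseq n) atTop (nhds α))
    (c : ℕ → ℝ) (hc : ∀ n, Phi (-(c n)) = αseq n)
    (z₀ : ℕ → ℝ) (hz₀ : ∀ n : ℕ, 2 ≤ n → Phi (-(dd ρ (c n) (z₀ n))) = 1 / n) :
    Tendsto (fun n : ℕ =>
        ∫ z in Set.Iic (z₀ n),
          (n : ℝ) * ((n : ℝ) * Phi (-(dd ρ (c n) z)) - 1) *
            (Phi (dd ρ (c n) z)) ^ (n - 2) * phi (dd ρ (c n) z) *
            dd ρ (c n) z * (G ρ (c n) z) ^ 2 * phi z)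
      atTop (nhds 0) := by
  obtain ⟨hρ0, hρ1⟩ := hρ
  set r := Real.sqrt ρ with hr
  set s := Real.sqrt (1 - ρ) with hs
  have hr0 : 0 < r := Real.sqrt_pos.2 hρ0
  have hs0 : 0 < s := Real.sqrt_pos.2 (by linarith)
  have hs1 : s < 1 := by
    rw [hs, Real.sqrt_lt' one_pos]; linarith
  set κ := (1 - s) / r with hκ
  have hκ0 : 0 < κ := div_pos (by linarith) hr0
  -- eventually n α_n < 1
  have hev1 : ∀ᶠ n : ℕ in atTop, (n : ℝ) * αseq n < 1 := hlim.eventually_lt_const hα.2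
  -- α_n → 0
  have hα0 : Tendsto αseq atTop (nhds 0) := by
    have h := hlim.mul (tendsto_inv_atTop_nhds_zero_nat (𝕜 := ℝ))
    rw [mul_zero] at h
    refine h.congr' ?_
    filter_upwards [eventually_gt_atTop 0] with n hn
    have : (n : ℝ) ≠ 0 := by positivity
    field_simp
  have hcinf : Tendsto c atTop atTop := by
    rw [tendsto_atTop]
    intro M
    filter_upwards [hα0.eventually_lt_const (Phi_pos' (-M))] with n hn
    by_contra hlt
    have : Phi (-M) ≤ Phi (-(c n)) := Phi_mono' (by linarith)
    rw [hc] at this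
    linarith
  have hzle : ∀ᶠ n : ℕ in atTop, z₀ n ≤ -(κ * c n) := by
    filter_upwards [hev1, eventually_ge_atTop 2] with n h1 h2
    have hn : (0:ℝ) < n := by positivity
    have hb : dd ρ (c n) (z₀ n) ≤ c n := by
      by_contra hlt
      have h3 : Phi (-(dd ρ (c n) (z₀ n))) ≤ Phi (-(c n)) := Phi_mono' (by linarith)
      rw [hc, hz₀ n h2, div_le_iff₀ hn] at h3
      linarith
    unfold dd at hb
    rw [← hr, ← hs, div_le_iff₀ hs0] at hb
    have : r * z₀ n ≤ r * (-(κ * c n)) := by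
      have : r * κ = 1 - s := by rw [hκ]; field_simp
      linear_combination hb + (c n) * this
    exact le_of_mul_le_mul_left this hr0
  have hzinf : Tendsto z₀ atTop atBot := by
    refine tendsto_atBot_mono' _ hzle ?_
    exact tendsto_neg_atTop_atBot.comp (hcinf.const_mul_atTop hκ0)
  set D := 2 * (1 - ρ) ^ ((3 : ℝ) / 2) with hD
  have hD0 : 0 < D := by
    have : 0 < 1 - ρ := by linarith
    positivity
  set A := (1 / κ + r) / s with hA
  set B := (1 / κ + 1 / r) / D with hB
  have hA0 : 0 < A := by positivity
  have hB0 : 0 < B := by positivity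
  set K := 2 * Real.exp 2 * Real.exp (3/2) * (1 + A) * A * B ^ 2 with hK
  have hgi : Integrable (fun z : ℝ => K * (z ^ 4 * phi z)) := g_int'.const_mul K
  refine squeeze_zero_norm' ?_ ((tail' hgi).comp hzinf)
  filter_upwards [hzle, eventually_ge_atTop 2, hzinf.eventually_le_atBot (-1),
    hcinf.eventually_ge_atTop 0] with n h1 h2 h3 h4
  refine norm_integral_le_of_norm_le hgi.integrableOn ?_
  refine (ae_restrict_iff' measurableSet_Iic).2 (Eventually.of_forall fun z hz => ?_)
  have hz' : z ≤ z₀ n := hz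
  have habs : |z| = -z := abs_of_nonpos (by linarith)
  have hz1 : 1 ≤ |z| := by linarith
  have hcz : c n ≤ 1 / κ * |z| := by
    rw [one_div, inv_mul_eq_div, le_div_iff₀ hκ0]
    linarith
  have hdA : |dd ρ (c n) z| ≤ A * |z| := by
    unfold dd
    rw [← hr, ← hs, abs_div, abs_of_pos hs0, hA, div_mul_eq_mul_div]
    gcongr
    calc |c n + r * z| ≤ |c n| + |r * z| := abs_add_le _ _
      _ = c n + r * |z| := by rw [abs_of_nonneg h4, abs_mul, abs_of_pos hr0]
      _ ≤ _ := by linarith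
  have hGB : |G ρ (c n) z| ≤ B * |z| := by
    unfold G
    rw [← hr, ← hD, abs_div, abs_of_pos hD0, hB, div_mul_eq_mul_div]
    gcongr
    calc |c n + z / r| ≤ |c n| + |z / r| := abs_add_le _ _
      _ = c n + 1 / r * |z| := by rw [abs_of_nonneg h4, abs_div, abs_of_pos hr0]; ring
      _ ≤ _ := by linarith
  have hcore := core' n h2 (dd ρ (c n) z)
  rw [Real.norm_eq_abs, abs_mul, abs_mul, abs_mul, abs_pow, abs_of_pos (phi_pos' z)]
  have hφ := (phi_pos' z).le
  have h1d : 1 + |dd ρ (c n) z| ≤ (1 + A) * |z| := by linarith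
  calc _ ≤ (2 * Real.exp 2 * Real.exp (3/2) * ((1 + A) * |z|)) * (A * |z|) * (B * |z|) ^ 2
        * phi z := by
        have := hcore.trans (mul_le_mul_of_nonneg_left h1d (by positivity))
        gcongr
    _ = K * (|z| ^ 4 * phi z) := by rw [hK]; ring
    _ = K * (z ^ 4 * phi z) := by rw [Even.pow_abs (by decide)]
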